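/- Let Z be a proper metric space (all closed balls are compact) on which a group G acts isometrically and properly. Then the topological (covering) dimension of the quotient space G\Z is at most the topological dimension of Z. -/

import Mathlib

/-- `DimLE X n`: every open cover of `X` has an open refinement covering `X`
in which no `n+2` distinct sets have a common point (covering dimension ≤ n). -/
def DimLE (X : Type*) [TopologicalSpace X] (n : ℕ) : Prop :=
  ∀ U : Set (Set X), (∀ u ∈ U, IsOpen u) → ⋃₀ U = Set.univ →
    ∃ V : Set (Set X), (∀ v ∈ V, IsOpen v) ∧ ⋃₀ V = Set.univ ∧
      (∀ v ∈ V, ∃ u ∈ U, v ⊆ u) ∧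
      ∀ s : Finset (Set X), ↑s ⊆ V → (⋂₀ (s : Set (Set X))).Nonempty → s.card ≤ n + 1

/-- Lebesgue covering dimension, as an element of `ℕ∞` (⊤ if no bound exists). -/
noncomputable def covDim (X : Type*) [TopologicalSpace X] : ℕ∞ :=
  sInf {n : ℕ∞ | ∃ d : ℕ, n = (d : ℕ∞) ∧ DimLE X d}

/-!
Say that a subset `A` of `X` has dimension at most `n` along `X` if every open cover of `X` shrinks
to one of order at most `n + 1` at the points of `A`. A paracompact normal space that is a
countable union of such sets has dimension at most `n`: shrink a locally finite cover once for each
set, pass to the intersection of the closures, and swell the resulting locally finite closed cover.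

For a properly discontinuous action on a locally compact, second countable Hausdorff space `Z`, each
`z` has a compact neighborhood `N` in which two points of one orbit differ by an element of the
finite stabilizer of `z`, so the projection is injective on the part of `N` fixed by that
stabilizer. This part contains every point of `N` whose stabilizer has as many elements as that of
`z`. Hence countably many such compact sets cover `Z`, and their images, each of dimension at most
`dim Z` along the quotient, cover the quotient. An isometric action that is proper in the pointwise
sense is properly discontinuous by the triangle inequality.
-/

open Set Topology TopologicalSpace

universe u

section Multiplicity

variable {X ι : Type*}

/-- The order of the indexed family `u` is at most `m` at the points of `A`: each of them lies in
`u i` for at most `m` indices `i`. Equal sets with different indices are counted separately. -/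
def MultiplicityLE (u : ι → Set X) (A : Set X) (m : ℕ∞) : Prop :=
  ∀ x ∈ A, {i | x ∈ u i}.encard ≤ m

lemma MultiplicityLE.mono {u v : ι → Set X} {A : Set X} {m : ℕ∞} (hv : MultiplicityLE v A m)
    (huv : ∀ i, u i ⊆ v i) : MultiplicityLE u A m :=
  fun x hx ↦ (encard_le_encard fun i hi ↦ huv i hi).trans (hv x hx)

lemma encard_le_coe_iff_forall_finset_card_le {s : Set X} {m : ℕ} :
    s.encard ≤ m ↔ ∀ t : Finset X, ↑t ⊆ s → t.card ≤ m := by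
  refine ⟨fun h t ht ↦ ?_, fun h ↦ ?_⟩
  · have := (encard_le_encard ht).trans h
    rwa [encard_coe_eq_coe_finsetCard, Nat.cast_le] at this
  · by_contra! hlt
    obtain ⟨t, hts, ht⟩ := exists_subset_encard_eq
      ((ENat.add_one_le_iff (ENat.natCast_ne_top m)).2 hlt)
    lift t to Finset X using finite_of_encard_eq_coe (k := m + 1) (by exact_mod_cast ht)
    have hcard : t.card = m + 1 := by
      rw [encard_coe_eq_coe_finsetCard] at ht
      exact_mod_cast ht
    exact absurd (h t hts) (by lia)

lemma forall_finset_sInter_nonempty_card_le_iff {V : Set (Set X)} {m : ℕ} :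
    (∀ s : Finset (Set X), ↑s ⊆ V → (⋂₀ (s : Set (Set X))).Nonempty → s.card ≤ m) ↔
      ∀ x, {v ∈ V | x ∈ v}.encard ≤ m := by
  simp only [encard_le_coe_iff_forall_finset_card_le]
  refine ⟨fun h x s hs ↦ h s (fun v hv ↦ (hs hv).1) ⟨x, fun v hv ↦ (hs hv).2⟩, ?_⟩
  rintro h s hsV ⟨x, hx⟩
  exact h x s fun v hv ↦ ⟨hsV hv, hx v hv⟩

lemma iUnion_iInter_eq_univ_of_antitone {w : ℕ → ι → Set X} (hw : Antitone w)
    (hcov : ∀ k, ⋃ i, w k i = univ) (hfin : ∀ x, {i | x ∈ w 0 i}.Finite) :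
    ⋃ i, ⋂ k, w k i = univ := by
  refine iUnion_eq_univ_iff.2 fun x ↦ ?_
  by_contra! hx
  simp only [mem_iInter, not_forall] at hx
  choose κ hκ using hx
  obtain ⟨N, hN⟩ := ((hfin x).image κ).bddAbove
  obtain ⟨i, hi⟩ := iUnion_eq_univ_iff.1 (hcov N) x
  have hκN : κ i ≤ N := hN ⟨i, hw (Nat.zero_le N) i hi, rfl⟩
  exact hκ i (hw hκN i hi)

end Multiplicity

section Swelling

variable {X ι : Type*} [TopologicalSpace X]

lemma isOpen_compl_iUnion_subtype {F : ι → Set X} (hF : ∀ i, IsClosed (F i))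
    (hlf : LocallyFinite F) (p : ι → Prop) : IsOpen (⋃ i : {i // p i}, F i)ᶜ :=
  have hlf_sub : LocallyFinite fun i : {i // p i} ↦ F i :=
    hlf.comp_injective Subtype.val_injective
  (hlf_sub.isClosed_iUnion fun i ↦ hF i).isOpen_compl

lemma exists_isClosed_locallyFinite_refinement {κ : Type*} [ParacompactSpace X] [NormalSpace X]
    {u : κ → Opens X} (hu : IsOpenCover u) :
    ∃ C : κ → Set X, (∀ j, IsClosed (C j)) ∧ LocallyFinite C ∧ ⋃ j, C j = univ ∧
      ∀ j, C j ⊆ u j := by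
  obtain ⟨v, hvo, hvc, hvf, hvu⟩ :=
    precise_refinement (fun j ↦ (u j : Set X)) (fun j ↦ (u j).isOpen) hu.iSup_set_eq_univ
  obtain ⟨C, hCc, hC, hCv⟩ := exists_iUnion_eq_closed_subset hvo hvf.point_finite hvc
  exact ⟨C, hC, hvf.subset hCv, hCc, fun j ↦ (hCv j).trans (hvu j)⟩

lemma exists_isOpen_swelling [ParacompactSpace X] [NormalSpace X] {F : ι → Set X} {m : ℕ∞}
    (hF : ∀ i, IsClosed (F i)) (hlf : LocallyFinite F) (hm : MultiplicityLE F univ m) :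
    ∃ V : ι → Set X, (∀ i, IsOpen (V i)) ∧ (∀ i, F i ⊆ V i) ∧ MultiplicityLE V univ m := by
  let O (x : X) : Opens X :=
    ⟨(⋃ i : {i // x ∉ F i}, F i)ᶜ, isOpen_compl_iUnion_subtype hF hlf _⟩
  have hO : IsOpenCover O := .of_sets _ <| iUnion_eq_univ_iff.2 fun x ↦ ⟨x, by simp⟩
  obtain ⟨C, hC, hClf, hCc, hCO⟩ := exists_isClosed_locallyFinite_refinement hO
  -- `C x` meets only those `F i` that contain `x`, so a point of `C x` stays in the `i`-th open set
  -- only if `x ∈ F i`.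
  refine ⟨fun i ↦ (⋃ x : {x // Disjoint (C x) (F i)}, C x)ᶜ,
    fun i ↦ isOpen_compl_iUnion_subtype hC hClf _, fun i w hw hwC ↦ ?_, fun y _ ↦ ?_⟩
  · obtain ⟨⟨x, hdisj⟩, hwx⟩ := mem_iUnion.1 hwC
    exact disjoint_left.1 hdisj hwx hw
  · obtain ⟨x, hyx⟩ := iUnion_eq_univ_iff.1 hCc y
    refine (encard_le_encard fun i hi ↦ ?_).trans (hm x (mem_univ x))
    have hmeet : ¬ Disjoint (C x) (F i) := fun hdisj ↦ hi (mem_iUnion.2 ⟨⟨x, hdisj⟩, hyx⟩)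
    obtain ⟨w, hwC, hwF⟩ := not_disjoint_iff.1 hmeet
    by_contra hxi
    exact hCO x hwC (mem_iUnion.2 ⟨⟨i, hxi⟩, hwF⟩)

end Swelling

section DimLEAlong

/-- The subset `A` of `X` has dimension at most `n` along `X`: every open cover of `X` can be shrunk
to an open cover of order at most `n + 1` at the points of `A`. This is the property of the pieces
that enters the countable sum theorem. Index types in the universe of `X` suffice, since a cover can
be indexed by its own members. -/
def DimLEAlong {X : Type u} [TopologicalSpace X] (A : Set X) (n : ℕ) : Prop :=
  ∀ ⦃ι : Type u⦄ (u : ι → Opens X), IsOpenCover u →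
    ∃ v ≤ u, IsOpenCover v ∧ MultiplicityLE (fun i ↦ (v i : Set X)) A (n + 1)

lemma DimLE.exists_isOpenCover_le {X ι : Type*} [TopologicalSpace X] {n : ℕ} (hX : DimLE X n)
    {u : ι → Opens X} (hu : IsOpenCover u) :
    ∃ v ≤ u, IsOpenCover v ∧ MultiplicityLE (fun i ↦ (v i : Set X)) univ (n + 1) := by
  obtain ⟨V, hVo, hVc, hVr, hVord⟩ := hX (range fun i ↦ (u i : Set X))
    (forall_mem_range.2 fun i ↦ (u i).isOpen) (by rw [sUnion_range, hu.iSup_set_eq_univ])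
  replace hVord := forall_finset_sInter_nonempty_card_le_iff.1 hVord
  have hVu : ∀ w : V, ∃ i, w.1 ⊆ u i := fun w ↦ by simpa using hVr w w.2
  choose a ha using hVu
  refine ⟨fun i ↦ ⨆ w : {w : V // a w = i}, ⟨w.1, hVo _ w.1.2⟩, fun i ↦ ?_, ?_, fun x _ ↦ ?_⟩
  · refine iSup_le ?_
    rintro ⟨w, rfl⟩
    exact ha w
  · refine eq_top_iff.2 fun x _ ↦ ?_
    obtain ⟨w, hw, hxw⟩ : x ∈ ⋃₀ V := hVc ▸ mem_univ x
    simp only [Opens.mem_iSup]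
    exact ⟨a ⟨w, hw⟩, ⟨⟨w, hw⟩, rfl⟩, hxw⟩
  · have hsub : {i | x ∈ ⨆ w : {w : V // a w = i}, (⟨w.1, hVo _ w.1.2⟩ : Opens X)} ⊆
        a '' {w | x ∈ w.1} := fun i hi ↦ by
      obtain ⟨⟨w, hw⟩, hxw⟩ := Opens.mem_iSup.1 hi
      exact ⟨w, hxw, hw⟩
    calc _ ≤ (a '' {w | x ∈ w.1}).encard := encard_le_encard hsub
      _ ≤ {w : V | x ∈ w.1}.encard := encard_image_le _ _
      _ = (Subtype.val '' {w : V | x ∈ w.1}).encard :=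
        (Subtype.val_injective.encard_image _).symm
      _ ≤ {w ∈ V | x ∈ w}.encard := encard_le_encard (by rintro _ ⟨w, hxw, rfl⟩; exact ⟨w.2, hxw⟩)
      _ ≤ n + 1 := mod_cast hVord x

variable {X : Type u} [TopologicalSpace X] {n : ℕ}

lemma DimLEAlong.dimLE (hX : DimLEAlong (univ : Set X) n) : DimLE X n := by
  intro U hUo hUc
  obtain ⟨v, hvU, hv, hvm⟩ := hX (fun i : U ↦ ⟨i, hUo i i.2⟩)
    (.of_sets _ (by rw [← sUnion_eq_iUnion, hUc]))
  refine ⟨range fun i ↦ (v i : Set X), forall_mem_range.2 fun i ↦ (v i).isOpen,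
    by rw [sUnion_range, hv.iSup_set_eq_univ], forall_mem_range.2 fun i ↦ ⟨i, i.2, hvU i⟩,
    forall_finset_sInter_nonempty_card_le_iff.2 fun x ↦ ?_⟩
  calc _ ≤ ((fun i ↦ (v i : Set X)) '' {i | x ∈ v i}).encard :=
        encard_le_encard (by rintro _ ⟨⟨i, rfl⟩, hxi⟩; exact ⟨i, hxi, rfl⟩)
    _ ≤ {i | x ∈ v i}.encard := encard_image_le _ _
    _ ≤ (n + 1 : ℕ) := mod_cast hvm x (mem_univ x)

lemma dimLEAlong_empty : DimLEAlong (∅ : Set X) n :=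
  fun _ u hu ↦ ⟨u, le_rfl, hu, fun _ hx ↦ hx.elim⟩

lemma DimLE.dimLEAlong_image {Z : Type*} [TopologicalSpace Z] [T2Space X] (hZ : DimLE Z n)
    (q : C(Z, X)) {K : Set Z} (hK : IsCompact K) (hinj : InjOn q K) : DimLEAlong (q '' K) n := by
  intro ι u hu
  obtain ⟨v, hvu, hv, hvm⟩ := hZ.exists_isOpenCover_le (hu.comap q)
  let w (i : ι) : Opens X := ⟨u i \ q '' (K \ v i),
    (u i).isOpen.sdiff ((hK.diff (v i).isOpen).image q.continuous).isClosed⟩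
  refine ⟨w, fun i ↦ sdiff_subset, eq_top_iff.2 fun x _ ↦ Opens.mem_iSup.2 ?_, ?_⟩
  · by_cases hx : x ∈ q '' K
    · obtain ⟨z, hz, rfl⟩ := hx
      obtain ⟨i, hi⟩ := hv.exists_mem z
      refine ⟨i, hvu i hi, ?_⟩
      rintro ⟨y, ⟨hyK, hyv⟩, hyz⟩
      exact hyv (hinj hyK hz hyz ▸ hi)
    · obtain ⟨i, hi⟩ := hu.exists_mem x
      exact ⟨i, hi, fun h ↦ hx (image_mono sdiff_subset h)⟩
  · rintro _ ⟨z, hz, rfl⟩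
    refine (encard_le_encard fun i hi ↦ ?_).trans (hvm z (mem_univ z))
    by_contra hzi
    exact hi.2 ⟨z, ⟨hz, hzi⟩, rfl⟩

lemma DimLEAlong.exists_closure_subset [NormalSpace X] {A : Set X} (hA : DimLEAlong A n)
    {ι : Type u} {u : ι → Opens X} (hu : IsOpenCover u) (hfin : ∀ x, {i | x ∈ u i}.Finite) :
    ∃ v : ι → Opens X, IsOpenCover v ∧ (∀ i, closure (v i : Set X) ⊆ u i) ∧
      MultiplicityLE (fun i ↦ closure (v i : Set X)) A (n + 1) := by
  obtain ⟨w, hwu, hw, hwm⟩ := hA u hu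
  obtain ⟨v, hvc, hvo, hvw⟩ := exists_iUnion_eq_closure_subset (fun i ↦ (w i).isOpen)
    (fun x ↦ (hfin x).subset fun i hi ↦ hwu i hi) hw.iSup_set_eq_univ
  exact ⟨fun i ↦ ⟨v i, hvo i⟩, .of_sets hvo hvc, fun i ↦ (hvw i).trans (hwu i), hwm.mono hvw⟩

lemma exists_isClosed_multiplicityLE_of_dimLEAlong [NormalSpace X] {A : ℕ → Set X}
    (hA : ∀ k, DimLEAlong (A k) n) (hAc : ⋃ k, A k = univ) {ι : Type u} {u : ι → Opens X}
    (hu : IsOpenCover u) (hfin : ∀ x, {i | x ∈ u i}.Finite) :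
    ∃ F : ι → Set X, (∀ i, IsClosed (F i)) ∧ ⋃ i, F i = univ ∧ (∀ i, F i ⊆ u i) ∧
      MultiplicityLE F univ (n + 1) := by
  let P := {v : ι → Opens X // IsOpenCover v ∧ ∀ x, {i | x ∈ v i}.Finite}
  have hstep (k : ℕ) (v : P) : ∃ v' : P, (∀ i, closure (v'.1 i : Set X) ⊆ v.1 i) ∧
      MultiplicityLE (fun i ↦ closure (v'.1 i : Set X)) (A k) (n + 1) := by
    obtain ⟨v', hv', hcl, hm⟩ := (hA k).exists_closure_subset v.2.1 v.2.2
    exact ⟨⟨v', hv', fun x ↦ (v.2.2 x).subset fun i hi ↦ hcl i (subset_closure hi)⟩, hcl, hm⟩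
  choose next hcl hm using hstep
  let w : ℕ → P := fun k ↦ Nat.rec ⟨u, hu, hfin⟩ next k
  have hw : Antitone fun k i ↦ ((w k).1 i : Set X) :=
    antitone_nat_of_succ_le fun k i ↦ subset_closure.trans (hcl k (w k) i)
  refine ⟨fun i ↦ ⋂ k, closure ((w (k + 1)).1 i : Set X), fun i ↦ isClosed_iInter fun k ↦
    isClosed_closure, ?_, fun i ↦ (iInter_subset _ 0).trans (hcl 0 (w 0) i), fun x _ ↦ ?_⟩
  · have hcov := iUnion_iInter_eq_univ_of_antitone hw (fun k ↦ (w k).2.1.iSup_set_eq_univ) hfin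
    exact eq_univ_of_subset (iUnion_mono fun i ↦ subset_iInter fun k ↦
      (iInter_subset _ (k + 1)).trans subset_closure) hcov
  · obtain ⟨k, hk⟩ := iUnion_eq_univ_iff.1 hAc x
    have hsub : {i | x ∈ ⋂ k, closure ((w (k + 1)).1 i : Set X)} ⊆
        {i | x ∈ closure ((w (k + 1)).1 i : Set X)} := fun i hi ↦ mem_iInter.1 hi k
    exact (encard_le_encard hsub).trans (hm k (w k) x hk)

theorem dimLE_of_countable_sUnion_eq_univ [ParacompactSpace X] [NormalSpace X] {S : Set (Set X)}
    (hS : S.Countable) (hdim : ∀ A ∈ S, DimLEAlong A n) (hcov : ⋃₀ S = univ) : DimLE X n := by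
  obtain ⟨A, hA, hAc⟩ := (exists_seq_cover_iff_countable (p := fun A : Set X ↦ DimLEAlong A n)
    ⟨∅, dimLEAlong_empty⟩).2 ⟨S, hS, hdim, hcov⟩
  refine DimLEAlong.dimLE fun ι u hu ↦ ?_
  obtain ⟨v, hvo, hvc, hvf, hvu⟩ :=
    precise_refinement (fun i ↦ (u i : Set X)) (fun i ↦ (u i).isOpen) hu.iSup_set_eq_univ
  obtain ⟨F, hF, hFc, hFv, hFm⟩ :=
    exists_isClosed_multiplicityLE_of_dimLEAlong hA hAc (.of_sets hvo hvc) hvf.point_finite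
  obtain ⟨V, hVo, hFV, hVm⟩ := exists_isOpen_swelling hF (hvf.subset hFv) hFm
  have hVu (i : ι) : F i ⊆ V i ∩ u i := subset_inter (hFV i) ((hFv i).trans (hvu i))
  exact ⟨fun i ↦ ⟨V i ∩ u i, (hVo i).inter (u i).isOpen⟩, fun i ↦ inter_subset_right,
    .of_sets _ (eq_univ_of_subset (iUnion_mono hVu) hFc), hVm.mono fun i ↦ inter_subset_left⟩

end DimLEAlong

section QuotientDimension

open MulAction

variable {G Z : Type*} [Group G] [MulAction G Z]

lemma injOn_quotientMk_inter_fixedPoints_stabilizer {N : Set Z} {z : Z}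
    (hN : ∀ g : G, ((g • ·) '' N ∩ N).Nonempty → g • z = z) :
    InjOn (Quotient.mk (orbitRel G Z)) (N ∩ fixedPoints (stabilizer G z) Z) := by
  rintro a ⟨ha, -⟩ b ⟨hb, hb_fixed⟩ hab
  obtain ⟨g, rfl⟩ : ∃ g : G, g • b = a := orbitRel_apply.1 (Quotient.exact hab)
  exact hb_fixed ⟨g, hN g ⟨g • b, ⟨b, hb, rfl⟩, ha⟩⟩

lemma mem_fixedPoints_stabilizer_of_card_eq {N : Set Z} {z w : Z}
    [Finite (stabilizer G z)] (hN : ∀ g : G, ((g • ·) '' N ∩ N).Nonempty → g • z = z) (hw : w ∈ N)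
    (hcard : Nat.card (stabilizer G w) = Nat.card (stabilizer G z)) :
    w ∈ fixedPoints (stabilizer G z) Z := by
  have hle : stabilizer G w ≤ stabilizer G z := fun g hg ↦
    hN g ⟨w, ⟨w, hw, hg⟩, hw⟩
  have heq := Subgroup.eq_of_le_of_card_ge hle hcard.ge
  exact fun g ↦ heq.ge g.2

variable [TopologicalSpace Z]

lemma isClosed_fixedPoints_subgroup [T2Space Z] [ContinuousConstSMul G Z] (H : Subgroup G) :
    IsClosed (fixedPoints H Z) := by
  simp only [fixedPoints, ofPred_forall]
  exact isClosed_iInter fun g ↦ isClosed_eq (continuous_const_smul (g : G)) continuous_id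

variable (G Z) in
lemma exists_countable_isCompact_injOn_quotientMk [T2Space Z] [LocallyCompactSpace Z]
    [SecondCountableTopology Z] [ContinuousConstSMul G Z] [ProperlyDiscontinuousSMul G Z] :
    ∃ S : Set (Set Z), S.Countable ∧ ⋃₀ S = univ ∧
      ∀ K ∈ S, IsCompact K ∧ InjOn (Quotient.mk (orbitRel G Z)) K := by
  have hfin (z : Z) : Finite (stabilizer G z) := ProperlyDiscontinuousSMul.finite_stabilizer z
  have hN (z : Z) : ∃ N ∈ 𝓝 z, IsCompact N ∧
      ∀ g : G, ((g • ·) '' N ∩ N).Nonempty → g • z = z := by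
    obtain ⟨U, hU, hUz⟩ := ProperlyDiscontinuousSMul.exists_nhds_image_smul_eq_self G z
    obtain ⟨N, hN, hNU, hNc⟩ := local_compact_nhds hU
    exact ⟨N, hN, hNc, fun g hg ↦ hUz g (hg.mono (inter_subset_inter (image_mono hNU) hNU))⟩
  choose N hN hNc hNz using hN
  let K (z : Z) : Set Z := N z ∩ fixedPoints (stabilizer G z) Z
  let stratum (k : ℕ) : Set Z := {z | Nat.card (stabilizer G z) = k}
  have hK (k : ℕ) : ∀ z ∈ stratum k, K z ∈ 𝓝[stratum k] z := fun z hz ↦ by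
    filter_upwards [mem_nhdsWithin_of_mem_nhds (hN z), self_mem_nhdsWithin] with w hw hwk
    exact ⟨hw, mem_fixedPoints_stabilizer_of_card_eq (hNz z) hw (hwk.trans hz.symm)⟩
  choose t _ ht htK using fun k ↦ countable_cover_nhdsWithin (hK k)
  refine ⟨K '' ⋃ k, t k, (countable_iUnion ht).image K, eq_univ_of_forall fun z ↦ ?_, ?_⟩
  · obtain ⟨y, hy, hzy⟩ := mem_iUnion₂.1 (htK _ (rfl : z ∈ stratum _))
    exact ⟨K y, mem_image_of_mem K (mem_iUnion_of_mem _ hy), hzy⟩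
  · rintro _ ⟨z, -, rfl⟩
    exact ⟨(hNc z).inter_right (isClosed_fixedPoints_subgroup _),
      injOn_quotientMk_inter_fixedPoints_stabilizer (hNz z)⟩

theorem DimLE.quotient_orbitRel [T2Space Z] [LocallyCompactSpace Z]
    [SecondCountableTopology Z] [ContinuousConstSMul G Z] [ProperlyDiscontinuousSMul G Z]
    {n : ℕ} (hZ : DimLE Z n) : DimLE (Quotient (orbitRel G Z)) n := by
  have hq : IsOpenQuotientMap (Quotient.mk (orbitRel G Z)) := isOpenQuotientMap_quotientMk
  have : SecondCountableTopology (Quotient (orbitRel G Z)) :=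
    ContinuousConstSMul.secondCountableTopology
  have : LocallyCompactSpace (Quotient (orbitRel G Z)) := hq.locallyCompactSpace
  obtain ⟨S, hS, hSc, hSK⟩ := exists_countable_isCompact_injOn_quotientMk G Z
  refine dimLE_of_countable_sUnion_eq_univ (hS.image (Quotient.mk (orbitRel G Z) '' ·)) ?_ ?_
  · rintro _ ⟨K, hK, rfl⟩
    exact hZ.dimLEAlong_image ⟨_, hq.continuous⟩ (hSK K hK).1 (hSK K hK).2
  · rw [← image_sUnion, hSc, image_univ, hq.surjective.range_eq]

end QuotientDimension

section IsometricAction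

variable {G Z : Type*} [Group G] [MulAction G Z]

lemma finite_setOf_smul_mem {U : Set Z} (hU : {g : G | ((g • ·) '' U ∩ U).Nonempty}.Finite)
    (x : Z) : {g : G | g • x ∈ U}.Finite := by
  rcases {g : G | g • x ∈ U}.eq_empty_or_nonempty with hempty | ⟨h, hh⟩
  · simp only [hempty, finite_empty]
  · refine (hU.image (· * h)).subset fun g hg ↦ ⟨g * h⁻¹, ⟨g • x, ⟨h • x, hh, ?_⟩, hg⟩, ?_⟩
    · simp only [smul_smul, inv_mul_cancel_right]
    · exact inv_mul_cancel_right g h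

lemma properlyDiscontinuousSMul_of_forall_nhds [TopologicalSpace Z]
    (h : ∀ x y : Z, ∃ U ∈ 𝓝 x, ∃ V ∈ 𝓝 y, {g : G | ((g • ·) '' U ∩ V).Nonempty}.Finite) :
    ProperlyDiscontinuousSMul G Z where
  finite_disjoint_inter_image {K L} hK hL := by
    let T (s : Set (Z × Z)) : Set G := {g | ∃ p ∈ s, g • p.1 = p.2}
    have hT_prod (U V : Set Z) : T (U ×ˢ V) = {g : G | ((g • ·) '' U ∩ V).Nonempty} := by
      ext g
      constructor
      · rintro ⟨p, hp, hgp⟩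
        exact ⟨p.2, ⟨p.1, hp.1, hgp⟩, hp.2⟩
      · rintro ⟨_, ⟨x, hx, rfl⟩, hgx⟩
        exact ⟨(x, g • x), ⟨hx, hgx⟩, rfl⟩
    rw [← hT_prod]
    refine (hK.prod hL).induction_on (p := fun s ↦ (T s).Finite) ?_ ?_ ?_ ?_
    · simp [T]
    · exact fun s t hst ht ↦ ht.subset fun g ⟨p, hp, hgp⟩ ↦ ⟨p, hst hp, hgp⟩
    · refine fun s t hs ht ↦ (hs.union ht).subset ?_
      rintro g ⟨p, hp | hp, hgp⟩
      exacts [.inl ⟨p, hp, hgp⟩, .inr ⟨p, hp, hgp⟩]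
    · rintro ⟨x, y⟩ -
      obtain ⟨U, hU, V, hV, hfin⟩ := h x y
      exact ⟨U ×ˢ V, mem_nhdsWithin_of_mem_nhds (prod_mem_nhds hU hV), hT_prod U V ▸ hfin⟩

lemma properlyDiscontinuousSMul_of_isIsometricSMul [PseudoMetricSpace Z] [IsIsometricSMul G Z]
    (hproper : ∀ z : Z, ∃ U : Set Z, IsOpen U ∧ z ∈ U ∧
      {g : G | ((g • ·) '' U ∩ U).Nonempty}.Finite) :
    ProperlyDiscontinuousSMul G Z := by
  refine properlyDiscontinuousSMul_of_forall_nhds fun x y ↦ ?_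
  obtain ⟨U, hUo, hyU, hfin⟩ := hproper y
  obtain ⟨ε, hε, hεU⟩ := Metric.isOpen_iff.1 hUo y hyU
  refine ⟨_, Metric.ball_mem_nhds x (half_pos hε), _, Metric.ball_mem_nhds y (half_pos hε),
    (finite_setOf_smul_mem hfin x).subset ?_⟩
  rintro g ⟨_, ⟨w, hw, rfl⟩, hgw⟩
  refine hεU ?_
  calc dist (g • x) y ≤ dist (g • x) (g • w) + dist (g • w) y := dist_triangle _ _ _
    _ = dist w x + dist (g • w) y := by rw [dist_smul, dist_comm]
    _ < ε / 2 + ε / 2 := add_lt_add hw hgw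
    _ = ε := add_halves ε

end IsometricAction

theorem stmt0_general {G Z : Type*} [Group G] [TopologicalSpace Z] [T2Space Z]
    [LocallyCompactSpace Z] [SecondCountableTopology Z] [MulAction G Z] [ContinuousConstSMul G Z]
    [ProperlyDiscontinuousSMul G Z] :
    covDim (Quotient (MulAction.orbitRel G Z)) ≤ covDim Z := by
  refine sInf_le_sInf ?_
  rintro _ ⟨d, rfl, hd⟩
  exact ⟨d, rfl, hd.quotient_orbitRel⟩

theorem stmt0 {G Z : Type*} [Group G] [MetricSpace Z] [ProperSpace Z] [MulAction G Z]
    (hiso : ∀ g : G, Isometry fun z : Z => g • z)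
    (hproper : ∀ z : Z, ∃ U : Set Z, IsOpen U ∧ z ∈ U ∧
      {g : G | ((fun z : Z => g • z) '' U ∩ U).Nonempty}.Finite) :
    covDim (Quotient (MulAction.orbitRel G Z)) ≤ covDim Z := by
  have : IsIsometricSMul G Z := ⟨hiso⟩
  have := properlyDiscontinuousSMul_of_isIsometricSMul hproper
  exact stmt0_general
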